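/- Suppose G is a Grothendieck category in which Ext¹(P,-) preserves direct limits for every finitely presented object P. Then the finitely presented objects form an abelian exact subcategory: in particular, the kernel of any epimorphism between finitely presented objects is finitely presented. -/

import Mathlib

/-!
STATEMENT 5: Suppose `G` is a Grothendieck category in which `Ext¹(P,-)`
preserves direct limits for every finitely presented object `P`.  Then the
finitely presented objects form an abelian exact subcategory (closed under
finite coproducts and under kernels and cokernels computed in `G`); in
particular, the kernel of any epimorphism between finitely presented objects
is finitely presented.
-/

open CategoryTheory Limits Opposite Abelian

universe w v u

variable {C : Type u} [Category.{v} C]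

/-- `Hom(X, -)` preserves filtered colimits. -/
def FinitelyPresented (X : C) : Prop :=
  ∀ (J : Type v) [SmallCategory J] [IsFiltered J] (D : J ⥤ C) (c : Cocone D),
    Nonempty (IsColimit c) →
      Nonempty (IsColimit ((coyoneda.obj (op X)).mapCocone c))

/-- The canonical map `colim Ext¹(P, Y_i) → Ext¹(P, colim Y_i)` is bijective for
every filtered system, expressed element-wise. -/
def Ext1PreservesDirectLimits [Abelian C] [HasExt.{w} C] (P : C) : Prop :=
  ∀ (J : Type v) [SmallCategory J] [IsFiltered J] (D : J ⥤ C)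
    (c : Cocone D), IsColimit c →
    ((∀ (i : J) (e : Ext P (D.obj i) 1),
        e.comp (Ext.mk₀ (c.ι.app i)) (add_zero 1) = 0 →
        ∃ (j : J) (φ : i ⟶ j), e.comp (Ext.mk₀ (D.map φ)) (add_zero 1) = 0) ∧
      (∀ e : Ext P c.pt 1, ∃ (i : J) (e' : Ext P (D.obj i) 1),
        e'.comp (Ext.mk₀ (c.ι.app i)) (add_zero 1) = e))

/-!
For a short exact sequence `0 → K → X → Y → 0` and a filtered system `D` with colimit `Z`, compare
the colimit of the exact sequences
`Hom(Y, D j) → Hom(X, D j) → Hom(K, D j) → Ext¹(Y, D j) → Ext¹(X, D j)`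
with the same sequence for `Z`. If `X` and `Y` are finitely presented, all comparison maps but the
middle one are bijective, so the middle one is bijective by the five lemma and `K` is finitely
presented. For an arbitrary `f : X ⟶ Y`, the image of `f` is the kernel of the epimorphism
`Y ⟶ cokernel f`, hence finitely presented, and `kernel f` is the kernel of the epimorphism from `X`
onto that image.
-/

namespace FinitelyPresented

lemma iff_isFinitelyPresentable {X : C} : FinitelyPresented X ↔ IsFinitelyPresentable.{v} X := by
  rw [isFinitelyPresentable_iff_preservesFilteredColimits]
  constructor
  · exact fun hX ↦ ⟨fun J _ _ ↦ ⟨fun {D} ↦ ⟨fun {c} hc ↦ hX J D c ⟨hc⟩⟩⟩⟩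
  · rintro _ J _ _ D c ⟨hc⟩
    exact ⟨isColimitOfPreserves _ hc⟩

lemma of_iso {X Y : C} (e : X ≅ Y) (hX : FinitelyPresented X) : FinitelyPresented Y := by
  rw [iff_isFinitelyPresentable] at hX ⊢
  have := Cardinal.fact_isRegular_aleph0
  exact isCardinalPresentable_of_iso e _

lemma of_isColimit {K : Type} [SmallCategory K] [FinCategory K] {F : K ⥤ C} {c : Cocone F}
    (hc : IsColimit c) (hF : ∀ k, FinitelyPresented (F.obj k)) : FinitelyPresented c.pt := by
  simp only [iff_isFinitelyPresentable] at hF ⊢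
  have := Cardinal.fact_isRegular_aleph0
  exact isCardinalPresentable_of_isColimit' c hc _ ((hasCardinalLT_aleph0_iff _).2 inferInstance)

protected lemma biprod [HasZeroMorphisms C] {X Y : C} [HasBinaryBiproduct X Y]
    (hX : FinitelyPresented X) (hY : FinitelyPresented Y) : FinitelyPresented (X ⊞ Y) :=
  of_isColimit (BinaryBiproduct.isColimit X Y) (by rintro ⟨_ | _⟩ <;> assumption)

protected lemma cokernel [HasZeroMorphisms C] {X Y : C} (f : X ⟶ Y) [HasCokernel f]
    (hX : FinitelyPresented X) (hY : FinitelyPresented Y) : FinitelyPresented (cokernel f) :=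
  of_isColimit (colimit.isColimit (parallelPair f 0)) (by rintro (_ | _) <;> assumption)

end FinitelyPresented

lemma nonempty_isColimit_mapCocone_coyoneda_iff [Preadditive C] {J : Type*} [Category* J]
    [IsFiltered J] {D : J ⥤ C} (c : Cocone D) (X : C) :
    Nonempty (IsColimit ((coyoneda.obj (op X)).mapCocone c)) ↔
      (∀ (i : J) (f : X ⟶ D.obj i), f ≫ c.ι.app i = 0 →
        ∃ (j : J) (φ : i ⟶ j), f ≫ D.map φ = 0) ∧
      ∀ f : X ⟶ c.pt, ∃ (i : J) (f' : X ⟶ D.obj i), f' ≫ c.ι.app i = f := by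
  constructor
  · rintro ⟨hc⟩
    refine ⟨fun i f hf ↦ ?_, Types.jointly_surjective_of_isColimit hc⟩
    simpa using (Types.FilteredColimit.isColimit_eq_iff' hc f (0 : X ⟶ D.obj i)).1 (by simpa)
  · rintro ⟨hinj, hsurj⟩
    refine ⟨Types.FilteredColimit.isColimitOf' _ _ (fun f ↦ ?_) (fun i f g hfg ↦ ?_)⟩
    · obtain ⟨i, f', hf'⟩ := hsurj f
      exact ⟨i, f', hf'.symm⟩
    · change X ⟶ D.obj i at f g
      replace hfg : f ≫ c.ι.app i = g ≫ c.ι.app i := hfg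
      obtain ⟨j, φ, hφ⟩ := hinj i (f - g) (by rw [Preadditive.sub_comp, hfg, sub_self])
      rw [Preadditive.sub_comp, sub_eq_zero] at hφ
      exact ⟨j, φ, hφ⟩

section ExtComparison

variable [Abelian C] [HasExt.{w} C] {J : Type*} [Category* J] {D : J ⥤ C}

/-- Injectivity of the comparison map `colim Extⁿ(P, D j) → Extⁿ(P, c.pt)` of a cocone `c` over a
filtered diagram `D`: a class at stage `i` that dies in `c.pt` already dies at a later stage. -/
def ExtComparisonInjective (P : C) (c : Cocone D) (n : ℕ) : Prop :=
  ∀ (i : J) (e : Ext P (D.obj i) n), e.comp (Ext.mk₀ (c.ι.app i)) (add_zero n) = 0 →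
    ∃ (j : J) (φ : i ⟶ j), e.comp (Ext.mk₀ (D.map φ)) (add_zero n) = 0

/-- Surjectivity of the comparison map `colim Extⁿ(P, D j) → Extⁿ(P, c.pt)` of a cocone `c` over a
filtered diagram `D`: every class in `c.pt` comes from some stage. -/
def ExtComparisonSurjective (P : C) (c : Cocone D) (n : ℕ) : Prop :=
  ∀ e : Ext P c.pt n, ∃ (i : J) (e' : Ext P (D.obj i) n),
    e'.comp (Ext.mk₀ (c.ι.app i)) (add_zero n) = e

lemma extComparisonInjective_zero_iff {P : C} {c : Cocone D} :
    ExtComparisonInjective P c 0 ↔ ∀ (i : J) (f : P ⟶ D.obj i), f ≫ c.ι.app i = 0 →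
      ∃ (j : J) (φ : i ⟶ j), f ≫ D.map φ = 0 := by
  simp only [ExtComparisonInjective, (Ext.mk₀_bijective _ _).surjective.forall,
    Ext.mk₀_comp_mk₀, Ext.mk₀_eq_zero_iff]

lemma extComparisonSurjective_zero_iff {P : C} {c : Cocone D} :
    ExtComparisonSurjective P c 0 ↔
      ∀ f : P ⟶ c.pt, ∃ (i : J) (f' : P ⟶ D.obj i), f' ≫ c.ι.app i = f := by
  simp only [ExtComparisonSurjective, (Ext.mk₀_bijective _ _).surjective.forall,
    (Ext.mk₀_bijective _ _).surjective.exists, Ext.mk₀_comp_mk₀,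
    (Ext.mk₀_bijective _ _).injective.eq_iff]

variable {c : Cocone D} {n : ℕ}

lemma ExtComparisonSurjective.exists_hom_of_stage [IsFilteredOrEmpty J] {P : C}
    (h : ExtComparisonSurjective P c n) (i : J) (e : Ext P c.pt n) :
    ∃ (j : J) (_ : i ⟶ j) (e' : Ext P (D.obj j) n),
      e'.comp (Ext.mk₀ (c.ι.app j)) (add_zero n) = e := by
  obtain ⟨k, e', he'⟩ := h e
  refine ⟨IsFiltered.max i k, IsFiltered.leftToMax i k,
    e'.comp (Ext.mk₀ (D.map (IsFiltered.rightToMax i k))) (add_zero n), ?_⟩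
  rw [Ext.comp_assoc_of_third_deg_zero, Ext.mk₀_comp_mk₀, c.w, he']

variable {S : ShortComplex C}

lemma exists_add_mk₀_comp_eq_of_extClass_comp_eq (hS : S.ShortExact) {Y : C} {x y : Ext S.X₁ Y n}
    (h : hS.extClass.comp y (add_comm 1 n) = hS.extClass.comp x (add_comm 1 n)) :
    ∃ b : Ext S.X₂ Y n, y + (Ext.mk₀ S.f).comp b (zero_add n) = x := by
  obtain ⟨b, hb⟩ := Ext.contravariant_sequence_exact₁ hS Y (x - y) (add_comm 1 n) (by
    rw [sub_eq_add_neg, Ext.comp_add, Ext.comp_neg, h, add_neg_cancel])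
  exact ⟨b, by rw [hb, add_sub_cancel]⟩

variable [IsFilteredOrEmpty J]

lemma ExtComparisonSurjective.of_shortExact (hS : S.ShortExact)
    (h₂ : ExtComparisonSurjective S.X₂ c n) (h₃ : ExtComparisonSurjective S.X₃ c (n + 1))
    (h₂' : ExtComparisonInjective S.X₂ c (n + 1)) : ExtComparisonSurjective S.X₁ c n := by
  intro x
  obtain ⟨i, e, he⟩ := h₃ (hS.extClass.comp x (add_comm 1 n))
  obtain ⟨j, φ, hφ⟩ := h₂' i ((Ext.mk₀ S.g).comp e (zero_add _)) (by
    rw [Ext.comp_assoc_of_third_deg_zero, he, hS.comp_extClass_assoc])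
  rw [Ext.comp_assoc_of_third_deg_zero] at hφ
  obtain ⟨a, ha⟩ := Ext.contravariant_sequence_exact₃ hS _ _ hφ (add_comm 1 n)
  have hδ : hS.extClass.comp (a.comp (Ext.mk₀ (c.ι.app j)) (add_zero n)) (add_comm 1 n) =
      hS.extClass.comp x (add_comm 1 n) := by
    rw [← Ext.comp_assoc_of_third_deg_zero, ha, Ext.comp_assoc_of_third_deg_zero,
      Ext.mk₀_comp_mk₀, c.w, he]
  obtain ⟨b, hb⟩ := exists_add_mk₀_comp_eq_of_extClass_comp_eq hS hδ
  obtain ⟨k, ψ, b', hb'⟩ := h₂.exists_hom_of_stage j b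
  refine ⟨k, a.comp (Ext.mk₀ (D.map ψ)) (add_zero n) + (Ext.mk₀ S.f).comp b' (zero_add n), ?_⟩
  rw [Ext.add_comp, Ext.comp_assoc_of_third_deg_zero, Ext.comp_assoc_of_third_deg_zero,
    Ext.mk₀_comp_mk₀, c.w, hb', hb]

lemma ExtComparisonInjective.of_shortExact (hS : S.ShortExact)
    (h₃ : ExtComparisonSurjective S.X₃ c n) (h₂ : ExtComparisonInjective S.X₂ c n)
    (h₃' : ExtComparisonInjective S.X₃ c (n + 1)) : ExtComparisonInjective S.X₁ c n := by
  intro i e he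
  obtain ⟨j, φ, hφ⟩ := h₃' i (hS.extClass.comp e (add_comm 1 n)) (by
    rw [Ext.comp_assoc_of_third_deg_zero, he, Ext.comp_zero])
  rw [Ext.comp_assoc_of_third_deg_zero] at hφ
  obtain ⟨b, hb⟩ := Ext.contravariant_sequence_exact₁ hS _ _ (add_comm 1 n) hφ
  have hbc : (Ext.mk₀ S.f).comp (b.comp (Ext.mk₀ (c.ι.app j)) (add_zero n)) (zero_add n) = 0 := by
    rw [← Ext.comp_assoc_of_third_deg_zero, hb, Ext.comp_assoc_of_third_deg_zero,
      Ext.mk₀_comp_mk₀, c.w, he]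
  obtain ⟨d, hd⟩ := Ext.contravariant_sequence_exact₂ hS _ _ hbc
  obtain ⟨k, ψ, d', hd'⟩ := h₃.exists_hom_of_stage j d
  obtain ⟨l, χ, hχ⟩ := h₂ k
    (b.comp (Ext.mk₀ (D.map ψ)) (add_zero n) - (Ext.mk₀ S.g).comp d' (zero_add n)) (by
      rw [sub_eq_add_neg, Ext.add_comp, Ext.neg_comp, Ext.comp_assoc_of_third_deg_zero,
        Ext.comp_assoc_of_third_deg_zero, Ext.mk₀_comp_mk₀, c.w, hd', hd, add_neg_cancel])
  refine ⟨l, φ ≫ ψ ≫ χ, ?_⟩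
  have hbd : b.comp (Ext.mk₀ (D.map (ψ ≫ χ))) (add_zero n) =
      (Ext.mk₀ S.g).comp (d'.comp (Ext.mk₀ (D.map χ)) (add_zero n)) (zero_add n) := by
    rwa [sub_eq_add_neg, Ext.add_comp, Ext.neg_comp, Ext.comp_assoc_of_third_deg_zero,
      Ext.comp_assoc_of_third_deg_zero, Ext.mk₀_comp_mk₀, ← D.map_comp, ← sub_eq_add_neg,
      sub_eq_zero] at hχ
  calc e.comp (Ext.mk₀ (D.map (φ ≫ ψ ≫ χ))) (add_zero n)
      = (Ext.mk₀ S.f).comp (b.comp (Ext.mk₀ (D.map (ψ ≫ χ))) (add_zero n)) (zero_add n) := by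
        rw [D.map_comp, ← Ext.mk₀_comp_mk₀, ← Ext.comp_assoc_of_third_deg_zero, ← hb,
          Ext.comp_assoc_of_third_deg_zero]
    _ = 0 := by
        rw [hbd, Ext.mk₀_comp_mk₀_assoc, S.zero, Ext.mk₀_zero, Ext.zero_comp]

end ExtComparison

section Kernel

variable [Abelian C] [HasExt.{w} C]

namespace FinitelyPresented

lemma iff_extComparison {X : C} :
    FinitelyPresented X ↔ ∀ (J : Type v) [SmallCategory J] [IsFiltered J] (D : J ⥤ C)
      (c : Cocone D), IsColimit c →
        ExtComparisonInjective.{w} X c 0 ∧ ExtComparisonSurjective.{w} X c 0 := by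
  simp only [extComparisonInjective_zero_iff, extComparisonSurjective_zero_iff]
  constructor
  · exact fun hX J _ _ D c hc ↦ (nonempty_isColimit_mapCocone_coyoneda_iff c X).1 (hX J D c ⟨hc⟩)
  · rintro h J _ _ D c ⟨hc⟩
    exact (nonempty_isColimit_mapCocone_coyoneda_iff c X).2 (h J D c hc)

lemma of_shortExact {S : ShortComplex C} (hS : S.ShortExact)
    (h₂ : FinitelyPresented S.X₂) (h₃ : FinitelyPresented S.X₃)
    (hExt₂ : Ext1PreservesDirectLimits.{w} S.X₂) (hExt₃ : Ext1PreservesDirectLimits.{w} S.X₃) :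
    FinitelyPresented S.X₁ := by
  rw [iff_extComparison.{w}] at h₂ h₃ ⊢
  intro J _ _ D c hc
  obtain ⟨inj₂, surj₂⟩ := h₂ J D c hc
  obtain ⟨-, surj₃⟩ := h₃ J D c hc
  obtain ⟨ext_inj₂, -⟩ := hExt₂ J D c hc
  obtain ⟨ext_inj₃, ext_surj₃⟩ := hExt₃ J D c hc
  exact ⟨.of_shortExact hS surj₃ inj₂ ext_inj₃, .of_shortExact hS surj₂ ext_surj₃ ext_inj₂⟩

variable {X Y : C} (hext : ∀ P : C, FinitelyPresented P → Ext1PreservesDirectLimits.{w} P)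
include hext

lemma kernel_of_epi (f : X ⟶ Y) [Epi f] (hX : FinitelyPresented X) (hY : FinitelyPresented Y) :
    FinitelyPresented (kernel f) :=
  have hS : (ShortComplex.mk (kernel.ι f) f (kernel.condition f)).ShortExact :=
    { exact := ShortComplex.exact_kernel f }
  of_shortExact hS hX hY (hext X hX) (hext Y hY)

protected lemma kernel (f : X ⟶ Y) (hX : FinitelyPresented X) (hY : FinitelyPresented Y) :
    FinitelyPresented (kernel f) :=
  have hI : FinitelyPresented (Abelian.image f) :=
    kernel_of_epi hext (cokernel.π f) hY (hX.cokernel f hY)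
  have e : kernel (Abelian.factorThruImage f) ≅ kernel f :=
    (kernelCompMono _ (Abelian.image.ι f)).symm ≪≫ kernelIsoOfEq (Abelian.image.fac f)
  (kernel_of_epi hext (Abelian.factorThruImage f) hX hI).of_iso e

end FinitelyPresented

end Kernel

theorem fp_abelian_exact_subcategory_general
    [Abelian C] [HasExt.{w} C]
    (hext : ∀ P : C, FinitelyPresented P → Ext1PreservesDirectLimits.{w} P) :
    (∀ X Y : C, FinitelyPresented X → FinitelyPresented Y →
        FinitelyPresented (X ⊞ Y)) ∧
    (∀ (X Y : C) (f : X ⟶ Y), FinitelyPresented X → FinitelyPresented Y →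
        FinitelyPresented (kernel f) ∧ FinitelyPresented (cokernel f)) ∧
    (∀ (X Y : C) (f : X ⟶ Y), Epi f → FinitelyPresented X →
        FinitelyPresented Y → FinitelyPresented (kernel f)) :=
  ⟨fun _ _ ↦ .biprod, fun _ _ f hX hY ↦ ⟨.kernel hext f hX hY, .cokernel f hX hY⟩,
    fun _ _ f _ ↦ .kernel_of_epi hext f⟩

theorem fp_abelian_exact_subcategory
    [Abelian C] [HasColimits C] [AB5 C] [HasExt.{w} C]
    (hsep : ∃ G : C, IsSeparator G)
    (hext : ∀ P : C, FinitelyPresented P → Ext1PreservesDirectLimits.{w} P) :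
    (∀ X Y : C, FinitelyPresented X → FinitelyPresented Y →
        FinitelyPresented (X ⊞ Y)) ∧
    (∀ (X Y : C) (f : X ⟶ Y), FinitelyPresented X → FinitelyPresented Y →
        FinitelyPresented (kernel f) ∧ FinitelyPresented (cokernel f)) ∧
    (∀ (X Y : C) (f : X ⟶ Y), Epi f → FinitelyPresented X →
        FinitelyPresented Y → FinitelyPresented (kernel f)) :=
  fp_abelian_exact_subcategory_general hext
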